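/- Fix a sample S = (s_1,…,s_m) and let δ ∈ (0,1). Let σ be an n×m random matrix whose entries are independent uniform Rademacher (±1) random variables. With probability at least 1 − δ over σ, R̂(F,S) ≤ R̂ⁿ_m(F,S,σ) + 2 ẑ(S) ln(1/δ)/(n m) + sqrt( ( 2 ẑ(S) ln(1/δ)/(n m) )² + 4 ẑ(S) ( R̂ⁿ_m(F,S,σ) + ν̂_F(S) ) ln(1/δ)/(n m) ). -/

import Mathlib

/-!
The `n × m` sign matrix consists of `nm` independent coordinates, and flipping one of them costs a
near-maximizer `f` at most `|f(s_i)| + σ_{j,i} f(s_i)`. Summed over the matrix, these costs are at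
most `nm (R̂ⁿ_m + ν̂)`, so that `nm (R̂ⁿ_m + ν̂) / (2ẑ)` is a self-bounding function. The modified
logarithmic Sobolev inequality turns self-boundedness into the differential inequality
`(1 - e^{-t}) ψ'(t) ≤ ψ(t)` for the cumulant generating function `ψ`; for `t ≤ 0` it integrates to
the Poisson bound `ψ(t) ≤ ψ'(0) (e^t - 1)`. By Chernoff's bound, with probability at least `1 - δ`,
`R̂ - R̂ⁿ_m ≤ √(4 ẑ (R̂ + ν̂) ln(1/δ) / (nm))`, a quadratic inequality in `R̂` whose solution is the
claim.
-/

open MeasureTheory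

noncomputable section

/-- Map a Boolean to a `±1` sign: `true ↦ 1`, `false ↦ -1`. -/
def sgnB (x : Bool) : ℝ := if x then 1 else -1

/-- The `n`-Monte-Carlo Empirical Rademacher Average
`R̂ⁿ_m(F,S,σ) = (1/n) Σ_j sup_{f∈F} (1/m) Σ_i σ_{j,i} f(s_i)`. -/
def mcera {X ι : Type*} (f : ι → X → ℝ) (n m : ℕ) (S : Fin m → X)
    (σ : Fin n → Fin m → Bool) : ℝ :=
  (n : ℝ)⁻¹ * ∑ j : Fin n, ⨆ l : ι, (m : ℝ)⁻¹ * ∑ k : Fin m, sgnB (σ j k) * f l (S k)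

/-- Uniform measure on `n × m` sign matrices: the entries are independent
uniform Rademacher (±1) random variables. -/
def radMeasure (n m : ℕ) : Measure (Fin n → Fin m → Bool) :=
  (PMF.uniformOfFintype (Fin n → Fin m → Bool)).toMeasure

/-- The Empirical Rademacher Average `R̂(F,S) = E_σ[R̂ⁿ_m(F,S,σ)]`. -/
def era {X ι : Type*} (f : ι → X → ℝ) (n m : ℕ) (S : Fin m → X) : ℝ :=
  ∫ σ, mcera f n m S σ ∂(radMeasure n m)

/-- The Rademacher Complexity `R(F,m) = E_S[R̂(F,S)]`, `S` being `m` i.i.d. samples. -/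
def rc {X ι : Type*} [MeasurableSpace X] (f : ι → X → ℝ) (n m : ℕ) (μ : Measure X) : ℝ :=
  ∫ S : Fin m → X, era f n m S ∂(Measure.pi fun _ : Fin m => μ)

/-- `ẑ(S) = sup_{f∈F, 1≤i≤m} |f(s_i)|`. -/
def zhat {X ι : Type*} (f : ι → X → ℝ) {m : ℕ} (S : Fin m → X) : ℝ :=
  ⨆ p : ι × Fin m, |f p.1 (S p.2)|

/-- `ν̂_F(S) = (1/m) sup_{f∈F} Σ_i |f(s_i)|`. -/
def nuhat {X ι : Type*} (f : ι → X → ℝ) {m : ℕ} (S : Fin m → X) : ℝ :=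
  (m : ℝ)⁻¹ * ⨆ l : ι, ∑ k : Fin m, |f l (S k)|

/-- The empirical wimpy variance `σ̂²_F(S) = (1/m) sup_{f∈F} Σ_i f(s_i)²`. -/
def sigma2hat {X ι : Type*} (f : ι → X → ℝ) {m : ℕ} (S : Fin m → X) : ℝ :=
  (m : ℝ)⁻¹ * ⨆ l : ι, ∑ k : Fin m, (f l (S k)) ^ 2

/-- The wimpy variance `σ²_F = sup_{f∈F} E_μ[f²]`. -/
def wimpyVar {X ι : Type*} [MeasurableSpace X] (f : ι → X → ℝ) (μ : Measure X) : ℝ :=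
  ⨆ l : ι, ∫ x, (f l x) ^ 2 ∂μ

/-- The positive supremum deviation `SD⁺(F,S) = sup_{f∈F} ((1/m)Σ_i f(s_i) - E_μ[f])`. -/
def sdPlus {X ι : Type*} [MeasurableSpace X] (f : ι → X → ℝ) (μ : Measure X)
    {m : ℕ} (S : Fin m → X) : ℝ :=
  ⨆ l : ι, ((m : ℝ)⁻¹ * ∑ k : Fin m, f l (S k) - ∫ x, f l x ∂μ)

/-- The negative supremum deviation `SD⁻(F,S) = sup_{f∈F} (E_μ[f] - (1/m)Σ_i f(s_i))`. -/
def sdMinus {X ι : Type*} [MeasurableSpace X] (f : ι → X → ℝ) (μ : Measure X)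
    {m : ℕ} (S : Fin m → X) : ℝ :=
  ⨆ l : ι, ((∫ x, f l x ∂μ) - (m : ℝ)⁻¹ * ∑ k : Fin m, f l (S k))

/-- `η_F = sup_{f∈F} E_μ[f] - a`. -/
def etaF {X ι : Type*} [MeasurableSpace X] (f : ι → X → ℝ) (μ : Measure X) (a : ℝ) : ℝ :=
  (⨆ l : ι, ∫ x, f l x ∂μ) - a

/-- `γ_F = b - inf_{f∈F} E_μ[f]`. -/
def gammaF {X ι : Type*} [MeasurableSpace X] (f : ι → X → ℝ) (μ : Measure X) (b : ℝ) : ℝ :=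
  b - ⨅ l : ι, ∫ x, f l x ∂μ

/-- `η̂_F(S) = sup_{f∈F} (1/m) Σ_i f(s_i) - a`. -/
def etahat {X ι : Type*} (f : ι → X → ℝ) {m : ℕ} (S : Fin m → X) (a : ℝ) : ℝ :=
  (⨆ l : ι, (m : ℝ)⁻¹ * ∑ k : Fin m, f l (S k)) - a

/-- `γ̂_F(S) = b - sup_{f∈F} (1/m) Σ_i f(s_i)`. -/
def gammahat {X ι : Type*} (f : ι → X → ℝ) {m : ℕ} (S : Fin m → X) (b : ℝ) : ℝ :=
  b - ⨆ l : ι, (m : ℝ)⁻¹ * ∑ k : Fin m, f l (S k)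

/-- `h(x) = (1+x) ln(1+x) - x`. -/
def hfun (x : ℝ) : ℝ := (1 + x) * Real.log (1 + x) - x

/-- `g(σ) = n m R̂ⁿ_m(F,S,σ) = Σ_j sup_{f∈F} Σ_i σ_{j,i} f(s_i)`. -/
def gup {X ι : Type*} (f : ι → X → ℝ) {n m : ℕ} (S : Fin m → X)
    (σ : Fin n → Fin m → Bool) : ℝ :=
  ∑ j : Fin n, ⨆ l : ι, ∑ k : Fin m, sgnB (σ j k) * f l (S k)

/-- `g_{j,i}(σ)`: infimum over `σ'_{j,i} ∈ {-1,1}` of `g` evaluated at `σ` with its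
`(j,i)` entry replaced by `σ'_{j,i}`. -/
def gji {X ι : Type*} (f : ι → X → ℝ) {n m : ℕ} (S : Fin m → X)
    (σ : Fin n → Fin m → Bool) (j : Fin n) (i : Fin m) : ℝ :=
  min (gup f S (Function.update σ j (Function.update (σ j) i true)))
      (gup f S (Function.update σ j (Function.update (σ j) i false)))

/-- `g(S) = m SD⁺(F,S) = sup_{f∈F} (Σ_i f(s_i) - m E_μ[f])`. -/
def gSDp {X ι : Type*} [MeasurableSpace X] (f : ι → X → ℝ) (μ : Measure X)
    {m : ℕ} (S : Fin m → X) : ℝ :=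
  ⨆ l : ι, (∑ k : Fin m, f l (S k) - m * ∫ x, f l x ∂μ)

/-- `g_i(S) = inf_{s'_i ∈ X} g(s_1,…,s_{i-1},s'_i,s_{i+1},…,s_m)` for `g = m SD⁺`. -/
def gSDpi {X ι : Type*} [MeasurableSpace X] (f : ι → X → ℝ) (μ : Measure X)
    {m : ℕ} (S : Fin m → X) (i : Fin m) : ℝ :=
  ⨅ s' : X, gSDp f μ (Function.update S i s')

/-- `g(S) = m SD⁻(F,S) = sup_{f∈F} (m E_μ[f] - Σ_i f(s_i))`. -/
def gSDm {X ι : Type*} [MeasurableSpace X] (f : ι → X → ℝ) (μ : Measure X)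
    {m : ℕ} (S : Fin m → X) : ℝ :=
  ⨆ l : ι, ((m : ℝ) * (∫ x, f l x ∂μ) - ∑ k : Fin m, f l (S k))

/-- `g_i(S) = inf_{s'_i ∈ X} g(s_1,…,s_{i-1},s'_i,s_{i+1},…,s_m)` for `g = m SD⁻`. -/
def gSDmi {X ι : Type*} [MeasurableSpace X] (f : ι → X → ℝ) (μ : Measure X)
    {m : ℕ} (S : Fin m → X) (i : Fin m) : ℝ :=
  ⨅ s' : X, gSDm f μ (Function.update S i s')

/-- `g(S) = m σ̂²_F(S) = sup_{f∈F} Σ_i f(s_i)²`. -/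
def gWv {X ι : Type*} (f : ι → X → ℝ) {m : ℕ} (S : Fin m → X) : ℝ :=
  ⨆ l : ι, ∑ k : Fin m, (f l (S k)) ^ 2

/-- `g_j(S) = sup_{f∈F} Σ_{i≠j} f(s_i)²`. -/
def gWvj {X ι : Type*} (f : ι → X → ℝ) {m : ℕ} (S : Fin m → X) (j : Fin m) : ℝ :=
  ⨆ l : ι, ∑ k ∈ Finset.univ.erase j, (f l (S k)) ^ 2

section Entropy

open Real Function ProbabilityTheory

/-- The entropy functional `Ent_μ(h) = E[h log h] - E[h] log E[h]` of the entropy method. -/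
def entropy {Ω : Type*} [MeasurableSpace Ω] (μ : Measure Ω) (h : Ω → ℝ) : ℝ :=
  ∫ x, h x * log (h x) ∂μ - (∫ x, h x ∂μ) * log (∫ x, h x ∂μ)

/-- The remainder `φ(t) = exp t - t - 1` of the tangent line to `exp` at `0`, in terms of which
the modified logarithmic Sobolev inequality is stated. -/
def expRemainder (t : ℝ) : ℝ := exp t - t - 1

lemma continuous_expRemainder : Continuous expRemainder := by
  unfold expRemainder
  fun_prop

lemma expRemainder_mul_le {s : ℝ} (hs₀ : 0 ≤ s) (hs₁ : s ≤ 1) (t : ℝ) :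
    expRemainder (s * t) ≤ s * expRemainder t := by
  have chord := convexOn_exp.2 (Set.mem_univ 0) (Set.mem_univ t) (sub_nonneg.2 hs₁) hs₀ (by ring)
  simp only [smul_eq_mul, mul_zero, zero_add, exp_zero, mul_one] at chord
  unfold expRemainder
  linarith

lemma exp_mul_sub_le (s t : ℝ) : exp s * (t - s) ≤ exp t - exp s := by
  have h := mul_le_mul_of_nonneg_left (add_one_le_exp (t - s)) (exp_pos s).le
  rw [← exp_add, add_sub_cancel] at h
  linarith

section Bounded

variable {Ω : Type*} [MeasurableSpace Ω] {μ : Measure Ω} {g w : Ω → ℝ} {C D : ℝ}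

lemma integrable_comp_of_abs_le [IsFiniteMeasure μ] (hg : Measurable g) (hgC : ∀ x, |g x| ≤ C)
    {φ : ℝ → ℝ} (hφ : Continuous φ) : Integrable (fun x => φ (g x)) μ := by
  obtain ⟨B, hB⟩ := isCompact_Icc.exists_bound_of_continuousOn (s := Set.Icc (-C) C) hφ.continuousOn
  exact .of_bound (hφ.measurable.comp hg).aestronglyMeasurable B
    (ae_of_all _ fun x => hB _ (abs_le.1 (hgC x)))

lemma integrable_exp_mul_comp [IsFiniteMeasure μ] (hg : Measurable g) (hgC : ∀ x, |g x| ≤ C)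
    (hw : Measurable w) (hwD : ∀ x, |w x| ≤ D) {φ : ℝ → ℝ} (hφ : Continuous φ) :
    Integrable (fun x => exp (g x) * φ (w x)) μ :=
  (integrable_comp_of_abs_le hw hwD hφ).bdd_mul hg.exp.aestronglyMeasurable
    (ae_of_all _ fun x => by
      rw [norm_of_nonneg (exp_pos _).le]
      exact exp_le_exp.2 ((le_abs_self _).trans (hgC x)))

lemma integral_exp_mem_Icc [IsProbabilityMeasure μ] (hg : Measurable g) (hgC : ∀ x, |g x| ≤ C) :
    ∫ x, exp (g x) ∂μ ∈ Set.Icc (exp (-C)) (exp C) := by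
  have hexp : Integrable (fun x => exp (g x)) μ :=
    integrable_comp_of_abs_le hg hgC continuous_exp
  constructor
  · simpa using integral_mono (integrable_const (exp (-C))) hexp
      fun x => exp_le_exp.2 (abs_le.1 (hgC x)).1
  · simpa using integral_mono hexp (integrable_const (exp C))
      fun x => exp_le_exp.2 (abs_le.1 (hgC x)).2

lemma abs_log_integral_exp_le [IsProbabilityMeasure μ] (hg : Measurable g)
    (hgC : ∀ x, |g x| ≤ C) : |log (∫ x, exp (g x) ∂μ)| ≤ C := by
  obtain ⟨hl, hu⟩ := integral_exp_mem_Icc (μ := μ) hg hgC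
  have hpos := (exp_pos _).trans_le hl
  exact abs_le.2 ⟨(le_log_iff_exp_le hpos).2 hl, (log_le_iff_le_exp hpos).2 hu⟩

lemma exp_log_integral_exp [NeZero μ] [IsFiniteMeasure μ] (hg : Measurable g)
    (hgC : ∀ x, |g x| ≤ C) : exp (log (∫ x, exp (g x) ∂μ)) = ∫ x, exp (g x) ∂μ :=
  exp_log (integral_exp_pos (integrable_comp_of_abs_le hg hgC continuous_exp))

/-- The Gibbs variational principle: equality holds for `w = g - log E[exp g]`. -/
lemma integral_exp_mul_le_entropy [NeZero μ] [IsFiniteMeasure μ]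
    (hg : Measurable g) (hgC : ∀ x, |g x| ≤ C) (hw : Measurable w) (hwD : ∀ x, |w x| ≤ D)
    (hw_one : ∫ x, exp (w x) ∂μ = 1) :
    ∫ x, exp (g x) * w x ∂μ ≤ entropy μ fun x => exp (g x) := by
  set L := log (∫ x, exp (g x) ∂μ)
  have hexpg : Integrable (fun x => exp (g x)) μ := integrable_comp_of_abs_le hg hgC continuous_exp
  have hexpw : Integrable (fun x => exp (w x)) μ := integrable_comp_of_abs_le hw hwD continuous_exp
  have hgw : Integrable (fun x => exp (g x) * w x) μ :=
    integrable_exp_mul_comp hg hgC hw hwD continuous_id'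
  have hgg : Integrable (fun x => exp (g x) * g x) μ :=
    integrable_exp_mul_comp hg hgC hg hgC continuous_id'
  have hle : ∫ x, (exp (g x) * w x + exp (g x) * L - exp (g x) * g x) ∂μ ≤
      ∫ x, (exp (w x) * exp L - exp (g x)) ∂μ :=
    integral_mono ((hgw.fun_add (hexpg.mul_const L)).sub hgg) ((hexpw.mul_const _).sub hexpg)
      fun x => by
        have := exp_mul_sub_le (g x) (w x + L)
        rw [exp_add] at this
        dsimp only
        linarith
  rw [integral_sub (hgw.fun_add (hexpg.mul_const L)) hgg, integral_add hgw (hexpg.mul_const L),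
    integral_sub (hexpw.mul_const _) hexpg, integral_mul_const, integral_mul_const, hw_one,
    one_mul, exp_log_integral_exp hg hgC, sub_self] at hle
  simp only [entropy, log_exp]
  linarith

lemma entropy_exp_le_integral_expRemainder [IsProbabilityMeasure μ] (hg : Measurable g)
    (hgC : ∀ x, |g x| ≤ C) (c : ℝ) :
    entropy μ (fun x => exp (g x)) ≤ ∫ x, exp (g x) * expRemainder (c - g x) ∂μ := by
  have hexpg : Integrable (fun x => exp (g x)) μ := integrable_comp_of_abs_le hg hgC continuous_exp
  have hgg : Integrable (fun x => exp (g x) * g x) μ :=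
    integrable_exp_mul_comp hg hgC hg hgC continuous_id'
  have expand : ∀ x, exp (g x) * expRemainder (c - g x) =
      exp c + exp (g x) * g x - exp (g x) * (c + 1) := fun x => by
    have : exp (g x) * exp (c - g x) = exp c := by rw [← exp_add, add_sub_cancel]
    simp only [expRemainder]
    linarith
  simp only [expand, entropy, log_exp]
  rw [integral_sub ((integrable_const _).fun_add hgg) (hexpg.mul_const _),
    integral_add (integrable_const _) hgg, integral_mul_const, integral_const]
  have := exp_mul_sub_le (log (∫ x, exp (g x) ∂μ)) c
  rw [exp_log_integral_exp hg hgC] at this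
  simp only [probReal_univ, smul_eq_mul, one_mul]
  linarith

end Bounded

section Product

variable {α β : Type*} [MeasurableSpace α] [MeasurableSpace β]
  {μ : Measure α} {ν : Measure β} {g : α × β → ℝ} {C : ℝ}

lemma entropy_prod [SFinite μ] [SFinite ν] {h : α × β → ℝ}
    (h_int : Integrable h (μ.prod ν))
    (h_log_int : Integrable (fun z => h z * log (h z)) (μ.prod ν))
    (h_marg_int : Integrable (fun x => (∫ y, h (x, y) ∂ν) * log (∫ y, h (x, y) ∂ν)) μ) :
    entropy (μ.prod ν) h =
      entropy μ (fun x => ∫ y, h (x, y) ∂ν) + ∫ x, entropy ν (fun y => h (x, y)) ∂μ := by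
  simp only [entropy]
  rw [integral_sub h_log_int.integral_prod_left h_marg_int, integral_prod _ h_int,
    integral_prod _ h_log_int]
  ring

variable [IsProbabilityMeasure μ] [IsProbabilityMeasure ν]

lemma measurable_log_integral_exp (hg : Measurable g) :
    Measurable fun x => log (∫ y, exp (g (x, y)) ∂ν) :=
  (hg.exp.stronglyMeasurable.integral_prod_right' (ν := ν)).measurable.log

lemma integrable_integral_exp_mul_log (hg : Measurable g) (hgC : ∀ z, |g z| ≤ C) :
    Integrable (fun x => (∫ y, exp (g (x, y)) ∂ν) * log (∫ y, exp (g (x, y)) ∂ν)) μ :=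
  (integrable_comp_of_abs_le hg hgC continuous_exp).integral_prod_left.mul_bdd
    (measurable_log_integral_exp hg).aestronglyMeasurable
    (ae_of_all _ fun x => abs_log_integral_exp_le (hg.comp measurable_prodMk_left)
      fun y => hgC (x, y))

lemma integrable_entropy_exp (hg : Measurable g) (hgC : ∀ z, |g z| ≤ C) :
    Integrable (fun x => entropy ν fun y => exp (g (x, y))) μ := by
  simp only [entropy, log_exp]
  exact (integrable_exp_mul_comp hg hgC hg hgC continuous_id').integral_prod_left.sub
    (integrable_integral_exp_mul_log hg hgC)

/-- Convexity of the entropy: test every section of `exp g` against the logarithm `w` of the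
density of the average of the sections. -/
lemma entropy_integral_exp_le (hg : Measurable g) (hgC : ∀ z, |g z| ≤ C) :
    entropy μ (fun x => ∫ y, exp (g (x, y)) ∂ν) ≤
      ∫ y, entropy μ (fun x => exp (g (x, y))) ∂ν := by
  set p : α → ℝ := fun x => ∫ y, exp (g (x, y)) ∂ν
  set M : ℝ := ∫ x, p x ∂μ
  set w : α → ℝ := fun x => log (p x) - log M
  have hg₁ : ∀ x, Measurable fun y => g (x, y) := fun x => hg.comp measurable_prodMk_left
  have hexpg : Integrable (fun z => exp (g z)) (μ.prod ν) :=
    integrable_comp_of_abs_le hg hgC continuous_exp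
  have hp : Integrable p μ := hexpg.integral_prod_left
  have hM : 0 < M := (integral_exp_pos hexpg).trans_eq (integral_prod _ hexpg)
  have hw : Measurable w := (measurable_log_integral_exp hg).sub_const _
  have hwC : ∀ x, |w x| ≤ C + |log M| := fun x =>
    (abs_sub _ _).trans (by
      gcongr
      exact abs_log_integral_exp_le (hg₁ x) fun y => hgC (x, y))
  have hw_one : ∫ x, exp (w x) ∂μ = 1 := by
    have hexpw : ∀ x, exp (w x) = p x / M := fun x => by
      rw [exp_sub, exp_log_integral_exp (hg₁ x) fun y => hgC (x, y), exp_log hM]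
    simp only [hexpw, integral_div]
    exact div_self hM.ne'
  have hgw : Integrable (fun z => exp (g z) * w z.1) (μ.prod ν) :=
    integrable_exp_mul_comp hg hgC (hw.comp measurable_fst) (fun z => hwC z.1) continuous_id
  calc entropy μ p = ∫ x, p x * w x ∂μ := by
        simp only [entropy, w, mul_sub]
        rw [integral_sub (integrable_integral_exp_mul_log hg hgC) (hp.mul_const _),
          integral_mul_const]
    _ = ∫ x, ∫ y, exp (g (x, y)) * w x ∂ν ∂μ := by simp only [integral_mul_const, p]
    _ = ∫ y, ∫ x, exp (g (x, y)) * w x ∂μ ∂ν := integral_integral_swap hgw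
    _ ≤ ∫ y, entropy μ (fun x => exp (g (x, y))) ∂ν :=
        integral_mono hgw.integral_prod_right
          (integrable_entropy_exp (hg.comp measurable_swap) fun z => hgC z.swap) fun y =>
          integral_exp_mul_le_entropy (hg.comp measurable_prodMk_right) (fun x => hgC (x, y))
            hw hwC hw_one

lemma entropy_prod_exp_le (hg : Measurable g) (hgC : ∀ z, |g z| ≤ C) :
    entropy (μ.prod ν) (fun z => exp (g z)) ≤
      ∫ y, entropy μ (fun x => exp (g (x, y))) ∂ν +
        ∫ x, entropy ν (fun y => exp (g (x, y))) ∂μ := by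
  rw [entropy_prod (integrable_comp_of_abs_le hg hgC continuous_exp)
    (by simpa only [log_exp] using integrable_exp_mul_comp hg hgC hg hgC continuous_id')
    (integrable_integral_exp_mul_log hg hgC)]
  gcongr
  exact entropy_integral_exp_le hg hgC

lemma entropy_prod_exp_le_add_sum {κ : Type*} [Fintype κ] {v₀ : β → ℝ} {v : κ → α × β → ℝ}
    (hg : Measurable g) (hgC : ∀ z, |g z| ≤ C) (hv₀ : Measurable v₀) (hv₀C : ∀ y, |v₀ y| ≤ C)
    (hv : ∀ i, Measurable (v i)) (hvC : ∀ i z, |v i z| ≤ C)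
    (hle : ∀ x, entropy ν (fun y => exp (g (x, y))) ≤
      ∑ i, ∫ y, exp (g (x, y)) * expRemainder (v i (x, y) - g (x, y)) ∂ν) :
    entropy (μ.prod ν) (fun z => exp (g z)) ≤
      ∫ z, exp (g z) * expRemainder (v₀ z.2 - g z) ∂(μ.prod ν) +
        ∑ i, ∫ z, exp (g z) * expRemainder (v i z - g z) ∂(μ.prod ν) := by
  have hrem : ∀ {u : α × β → ℝ}, Measurable u → (∀ z, |u z| ≤ C) →
      Integrable (fun z => exp (g z) * expRemainder (u z - g z)) (μ.prod ν) := fun hu huC =>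
    integrable_exp_mul_comp hg hgC (hu.sub hg)
      (fun z => (abs_sub _ _).trans (add_le_add (huC z) (hgC z))) continuous_expRemainder
  have hrem₀ := hrem (u := fun z => v₀ z.2) (hv₀.comp measurable_snd) fun z => hv₀C z.2
  have hrem₁ := fun i => (hrem (hv i) (hvC i)).integral_prod_left
  refine (entropy_prod_exp_le hg hgC).trans (add_le_add ?_ ?_)
  · rw [integral_prod_symm _ hrem₀]
    exact integral_mono (integrable_entropy_exp (hg.comp measurable_swap) fun z => hgC z.swap)
      hrem₀.integral_prod_right fun y => entropy_exp_le_integral_expRemainder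
        (hg.comp measurable_prodMk_right) (fun x => hgC (x, y)) (v₀ y)
  · simp only [integral_prod _ (hrem (hv _) (hvC _))]
    rw [← integral_finsetSum _ fun i _ => hrem₁ i]
    exact integral_mono (integrable_entropy_exp hg hgC)
      (integrable_finsetSum _ fun i _ => hrem₁ i) hle

end Product

lemma entropy_comp_measurePreserving {Ω Ω' : Type*} [MeasurableSpace Ω] [MeasurableSpace Ω']
    {μ : Measure Ω} {ν : Measure Ω'} {e : Ω ≃ᵐ Ω'} (he : MeasurePreserving e μ ν) (h : Ω' → ℝ) :
    entropy μ (fun x => h (e x)) = entropy ν h := by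
  simp only [entropy]
  rw [he.integral_comp' (g := fun x => h x * log (h x)), he.integral_comp' (g := h)]

lemma exists_measurePreserving_fin_cons {d : ℕ} {Ω : Fin (d + 1) → Type*}
    [∀ i, MeasurableSpace (Ω i)] (μ : ∀ i, Measure (Ω i)) [∀ i, SigmaFinite (μ i)] :
    ∃ e : Ω 0 × (∀ i : Fin d, Ω i.succ) ≃ᵐ ∀ i, Ω i,
      MeasurePreserving e ((μ 0).prod (.pi fun i => μ i.succ)) (.pi μ) ∧
        ∀ x y, e (x, y) = Fin.cons x y :=
  ⟨(MeasurableEquiv.piFinSuccAbove Ω 0).symm, (measurePreserving_piFinSuccAbove μ 0).symm,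
    fun x y => Fin.insertNth_zero x y⟩

lemma entropy_pi_exp_le_fin {d : ℕ} {Ω : Fin d → Type*} [∀ i, MeasurableSpace (Ω i)]
    {μ : ∀ i, Measure (Ω i)} [∀ i, IsProbabilityMeasure (μ i)]
    {g : (∀ i, Ω i) → ℝ} {v : Fin d → (∀ i, Ω i) → ℝ} {C : ℝ} (hg : Measurable g)
    (hgC : ∀ x, |g x| ≤ C) (hv : ∀ i, Measurable (v i)) (hvC : ∀ i x, |v i x| ≤ C)
    (hdep : ∀ i, DependsOn (v i) {i}ᶜ) :
    entropy (.pi μ) (fun x => exp (g x)) ≤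
      ∑ i, ∫ x, exp (g x) * expRemainder (v i x - g x) ∂(.pi μ) := by
  induction d with
  | zero => simp [entropy, Measure.pi_of_empty μ]
  | succ d ih =>
    obtain ⟨e, he, he_cons⟩ := exists_measurePreserving_fin_cons μ
    obtain ⟨x₀⟩ : Nonempty (Ω 0) := (μ 0).nonempty_of_neZero
    let v₀ := fun y => v 0 (e (x₀, y))
    have hv₀ : ∀ z, v 0 (e z) = v₀ z.2 := fun ⟨x, y⟩ => hdep 0 fun i hi => by
      obtain ⟨j, rfl⟩ := Fin.exists_succ_eq.2 hi
      rw [he_cons, he_cons, Fin.cons_succ, Fin.cons_succ]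
    have tail_dep : ∀ x (i : Fin d), DependsOn (fun y => v i.succ (e (x, y))) {i}ᶜ :=
      fun x i y y' hy => hdep i.succ fun j hj => by
        rw [he_cons, he_cons]
        cases j using Fin.cases with
        | zero => rfl
        | succ j => exact hy j (by simpa using hj)
    have hge := hg.comp e.measurable
    have hve := fun i => (hv i).comp e.measurable
    rw [← entropy_comp_measurePreserving he, Fin.sum_univ_succ]
    have transfer := fun i =>
      he.integral_comp' (g := fun x => exp (g x) * expRemainder (v i x - g x))
    simp only [← transfer, hv₀]
    exact entropy_prod_exp_le_add_sum hge (fun _ => hgC _)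
      ((hve 0).comp measurable_prodMk_left) (fun _ => hvC _ _) (fun i => hve i.succ)
      (fun _ _ => hvC _ _) fun x => ih (hge.comp measurable_prodMk_left) (fun _ => hgC _)
        (fun i => (hve i.succ).comp measurable_prodMk_left) (fun _ _ => hvC _ _) (tail_dep x)

/-- The modified logarithmic Sobolev inequality. -/
theorem entropy_pi_exp_le {κ : Type*} [Fintype κ] {Ω : κ → Type*} [∀ i, MeasurableSpace (Ω i)]
    {μ : ∀ i, Measure (Ω i)} [∀ i, IsProbabilityMeasure (μ i)]
    {g : (∀ i, Ω i) → ℝ} {v : κ → (∀ i, Ω i) → ℝ} {C : ℝ} (hg : Measurable g)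
    (hgC : ∀ x, |g x| ≤ C) (hv : ∀ i, Measurable (v i)) (hvC : ∀ i x, |v i x| ≤ C)
    (hdep : ∀ i, DependsOn (v i) {i}ᶜ) :
    entropy (.pi μ) (fun x => exp (g x)) ≤
      ∑ i, ∫ x, exp (g x) * expRemainder (v i x - g x) ∂(.pi μ) := by
  let σ := (Fintype.equivFin κ).symm
  let e := MeasurableEquiv.piCongrLeft Ω σ
  have he : MeasurePreserving e (.pi fun i => μ (σ i)) (.pi μ) := measurePreserving_piCongrLeft μ σ
  rw [← entropy_comp_measurePreserving he, ← σ.sum_comp]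
  simp only [← he.integral_comp' (g := fun x => exp (g x) * expRemainder (v _ x - g x))]
  refine entropy_pi_exp_le_fin (hg.comp e.measurable) (fun _ => hgC _)
    (fun i => (hv (σ i)).comp e.measurable) (fun _ _ => hvC _ _) fun i x y hxy => hdep _ ?_
  intro j hj
  obtain ⟨k, rfl⟩ := σ.surjective j
  simp only [e, MeasurableEquiv.coe_piCongrLeft, Equiv.piCongrLeft_apply_apply]
  exact hxy k (by simpa using hj)

end Entropy

section Herbst

open Real Filter Topology

variable {ψ : ℝ → ℝ}

lemma exp_sub_one_neg {t : ℝ} (ht : t < 0) : exp t - 1 < 0 :=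
  sub_neg.2 (exp_lt_one_iff.2 ht)

lemma tendsto_div_exp_sub_one {a : ℝ} (hψ : HasDerivAt ψ a 0) (hψ₀ : ψ 0 = 0) :
    Tendsto (fun t => ψ t / (exp t - 1)) (𝓝[≠] 0) (𝓝 a) := by
  have hslope := (hasDerivAt_iff_tendsto_slope.1 hψ).div
    (hasDerivAt_iff_tendsto_slope.1 (hasDerivAt_exp 0)) (exp_pos 0).ne'
  rw [exp_zero, div_one] at hslope
  refine hslope.congr' (eventually_mem_nhdsWithin.mono fun t ht => ?_)
  simp only [Pi.div_apply, slope_def_field, hψ₀, exp_zero, sub_zero]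
  exact div_div_div_cancel_right₀ ht _ _

lemma antitoneOn_div_exp_sub_one (hψ : Differentiable ℝ ψ)
    (hle : ∀ t < 0, (1 - exp (-t)) * deriv ψ t ≤ ψ t) :
    AntitoneOn (fun t => ψ t / (exp t - 1)) (Set.Iio 0) := by
  have hderiv : ∀ t < 0, HasDerivAt (fun t => ψ t / (exp t - 1))
      ((deriv ψ t * (exp t - 1) - ψ t * exp t) / (exp t - 1) ^ 2) t := fun t ht =>
    (hψ t).hasDerivAt.div ((hasDerivAt_exp t).sub_const 1) (exp_sub_one_neg ht).ne
  refine antitoneOn_of_hasDerivWithinAt_nonpos (convex_Iio 0)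
    (fun t ht => (hderiv t ht).continuousAt.continuousWithinAt)
    (fun t ht => (hderiv t (interior_Iio.subset ht)).hasDerivWithinAt) fun t ht => ?_
  have numerator : deriv ψ t * (exp t - 1) - ψ t * exp t =
      exp t * ((1 - exp (-t)) * deriv ψ t - ψ t) := by
    rw [exp_neg]
    field_simp
  rw [numerator]
  exact div_nonpos_of_nonpos_of_nonneg (mul_nonpos_of_nonneg_of_nonpos (exp_pos t).le
    (sub_nonpos.2 (hle t (interior_Iio.subset ht)))) (sq_nonneg _)

/-- Herbst's argument: by the differential inequality, `ψ t / (exp t - 1)` decreases on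
`(-∞, 0)`, hence it stays above its limit `ψ'(0)` at `0`. -/
lemma le_deriv_mul_exp_sub_one (hψ : Differentiable ℝ ψ) (hψ₀ : ψ 0 = 0)
    (hle : ∀ t < 0, (1 - exp (-t)) * deriv ψ t ≤ ψ t) {t : ℝ} (ht : t ≤ 0) :
    ψ t ≤ deriv ψ 0 * (exp t - 1) := by
  rcases ht.eq_or_lt with rfl | ht
  · simp [hψ₀]
  have hlim := (tendsto_div_exp_sub_one (hψ 0).hasDerivAt hψ₀).mono_left (nhdsLT_le_nhdsNE 0)
  refine (le_div_iff_of_neg (exp_sub_one_neg ht)).1 (le_of_tendsto hlim ?_)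
  filter_upwards [Ioo_mem_nhdsLT ht] with s hs
  exact antitoneOn_div_exp_sub_one hψ hle ht hs.2 hs.1.le

lemma exp_le_quadratic_of_nonpos {t : ℝ} (ht : t ≤ 0) : exp t ≤ 1 + t + t ^ 2 / 2 := by
  have hpos : 0 < 1 + -t + (-t) ^ 2 / 2 := by nlinarith
  calc exp t = (exp (-t))⁻¹ := by rw [exp_neg, inv_inv]
    _ ≤ (1 + -t + (-t) ^ 2 / 2)⁻¹ :=
      inv_anti₀ hpos (quadratic_le_exp_of_nonneg (neg_nonneg.2 ht))
    _ ≤ 1 + t + t ^ 2 / 2 := by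
      rw [inv_le_iff_one_le_mul₀ hpos]
      nlinarith [sq_nonneg (t ^ 2)]

end Herbst

section SelfBounding

open Real ProbabilityTheory

/-- A self-bounding function `W` of independent coordinates: for each coordinate `i` there is a
function `V i ≤ W` that does not depend on it, such that the defects `W - V i` are at most `1` and
add up to at most `W`. -/
structure IsSelfBounding {κ : Type*} [Fintype κ] {Ω : κ → Type*} (W : (∀ i, Ω i) → ℝ)
    (V : κ → (∀ i, Ω i) → ℝ) : Prop where
  dependsOn : ∀ i, DependsOn (V i) {i}ᶜ
  le : ∀ i x, V i x ≤ W x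
  sub_le_one : ∀ i x, W x - V i x ≤ 1
  sum_sub_le : ∀ x, ∑ i, (W x - V i x) ≤ W x

namespace IsSelfBounding

variable {κ : Type*} [Fintype κ] {Ω : κ → Type*} {W : (∀ i, Ω i) → ℝ} {V : κ → (∀ i, Ω i) → ℝ}

lemma nonneg (h : IsSelfBounding W V) (x : ∀ i, Ω i) : 0 ≤ W x :=
  (Finset.sum_nonneg fun i _ => sub_nonneg.2 (h.le i x)).trans (h.sum_sub_le x)

lemma le_add_card (h : IsSelfBounding W V) (s : Finset κ) {x y : ∀ i, Ω i}
    (hxy : ∀ i ∉ s, x i = y i) : W x ≤ W y + s.card := by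
  classical
  induction s using Finset.induction_on generalizing x with
  | empty => simp [funext fun i => hxy i (Finset.notMem_empty i)]
  | insert a s ha ih =>
    have hV : V a x = V a (Function.update x a (y a)) :=
      h.dependsOn a fun i hi => (Function.update_of_ne hi _ _).symm
    have hstep : ∀ i ∉ s, Function.update x a (y a) i = y i := fun i hi => by
      rcases eq_or_ne i a with rfl | hia
      · simp
      · rw [Function.update_of_ne hia, hxy i (by simp [hia, hi])]
    have := ih hstep
    have := h.sub_le_one a x
    have := h.le a (Function.update x a (y a))
    rw [Finset.card_insert_of_notMem ha]
    push_cast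
    linarith

lemma exists_abs_le (h : IsSelfBounding W V) : ∃ C, ∀ x, |W x| ≤ C := by
  rcases isEmpty_or_nonempty (∀ i, Ω i) with hΩ | ⟨⟨x₀⟩⟩
  · exact ⟨0, isEmptyElim⟩
  · exact ⟨W x₀ + Fintype.card κ, fun x => by
      rw [abs_of_nonneg (h.nonneg x)]
      exact h.le_add_card Finset.univ (by simp)⟩

lemma sum_exp_mul_expRemainder_le (h : IsSelfBounding W V) (t : ℝ) (x : ∀ i, Ω i) :
    ∑ i, exp (t * W x) * expRemainder (t * V i x - t * W x) ≤
      expRemainder (-t) * (W x * exp (t * W x)) := by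
  have hrem : 0 ≤ expRemainder (-t) := by
    linarith [add_one_le_exp (-t), expRemainder.eq_1 (-t)]
  calc ∑ i, exp (t * W x) * expRemainder (t * V i x - t * W x)
      ≤ ∑ i, exp (t * W x) * ((W x - V i x) * expRemainder (-t)) := by
        gcongr with i
        rw [show t * V i x - t * W x = (W x - V i x) * -t by ring]
        exact expRemainder_mul_le (sub_nonneg.2 (h.le i x)) (h.sub_le_one i x) _
    _ = exp (t * W x) * expRemainder (-t) * ∑ i, (W x - V i x) := by
        rw [Finset.mul_sum]
        exact Finset.sum_congr rfl fun i _ => by ring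
    _ ≤ exp (t * W x) * expRemainder (-t) * W x := by
        gcongr
        exact h.sum_sub_le x
    _ = expRemainder (-t) * (W x * exp (t * W x)) := by ring

variable [∀ i, MeasurableSpace (Ω i)] (μ : ∀ i, Measure (Ω i)) [∀ i, IsProbabilityMeasure (μ i)]

lemma integrable_comp (h : IsSelfBounding W V) (hW : Measurable W) {φ : ℝ → ℝ}
    (hφ : Continuous φ) : Integrable (fun x => φ (W x)) (.pi μ) := by
  obtain ⟨C, hC⟩ := h.exists_abs_le
  exact integrable_comp_of_abs_le hW hC hφ

lemma integrable_exp_mul (h : IsSelfBounding W V) (hW : Measurable W) (t : ℝ) :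
    Integrable (fun x => exp (t * W x)) (.pi μ) :=
  h.integrable_comp μ hW (φ := fun y => exp (t * y)) (by fun_prop)

lemma mem_interior_integrableExpSet (h : IsSelfBounding W V) (hW : Measurable W) (t : ℝ) :
    t ∈ interior (integrableExpSet W (.pi μ)) := by
  have huniv : integrableExpSet W (.pi μ) = Set.univ :=
    Set.eq_univ_of_forall (h.integrable_exp_mul μ hW)
  simp [huniv]

lemma entropy_exp_le (h : IsSelfBounding W V) (hW : Measurable W) (hV : ∀ i, Measurable (V i))
    (t : ℝ) : entropy (.pi μ) (fun x => exp (t * W x)) ≤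
      expRemainder (-t) * ∫ x, W x * exp (t * W x) ∂(.pi μ) := by
  obtain ⟨C, hC⟩ := h.exists_abs_le
  have hVC : ∀ i x, |V i x| ≤ C + 1 := fun i x => by
    have := abs_le.1 (hC x)
    exact abs_le.2 ⟨by linarith [h.sub_le_one i x, h.nonneg x], by linarith [h.le i x]⟩
  have htW : ∀ x, |t * W x| ≤ |t| * (C + 1) := fun x => by
    rw [abs_mul]
    gcongr
    linarith [hC x]
  have htV : ∀ i x, |t * V i x| ≤ |t| * (C + 1) := fun i x => by
    rw [abs_mul]
    gcongr
    exact hVC i x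
  have hrem : ∀ i, Integrable (fun x => exp (t * W x) * expRemainder (t * V i x - t * W x))
      (.pi μ) := fun i =>
    integrable_exp_mul_comp (hW.const_mul t) htW (((hV i).const_mul t).sub (hW.const_mul t))
      (fun x => (abs_sub _ _).trans (add_le_add (htV i x) (htW x))) continuous_expRemainder
  refine (entropy_pi_exp_le (hW.const_mul t) htW (fun i => (hV i).const_mul t) htV
    fun i x y hxy => by rw [h.dependsOn i hxy]).trans ?_
  rw [← integral_finsetSum _ fun i _ => hrem i, ← integral_const_mul]
  exact integral_mono (integrable_finsetSum _ fun i _ => hrem i)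
    ((h.integrable_comp μ hW (φ := fun y => y * exp (t * y)) (by fun_prop)).const_mul _)
    (h.sum_exp_mul_expRemainder_le t)

lemma one_sub_exp_neg_mul_deriv_cgf_le (h : IsSelfBounding W V) (hW : Measurable W)
    (hV : ∀ i, Measurable (V i)) (t : ℝ) :
    (1 - exp (-t)) * deriv (cgf W (.pi μ)) t ≤ cgf W (.pi μ) t := by
  have hent := h.entropy_exp_le μ hW hV t
  have hpos : 0 < mgf W (.pi μ) t :=
    mgf_pos (h.integrable_exp_mul μ hW t)
  have hentropy : entropy (.pi μ) (fun x => exp (t * W x)) =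
      t * ∫ x, W x * exp (t * W x) ∂(.pi μ) - mgf W (.pi μ) t * cgf W (.pi μ) t := by
    simp only [entropy, log_exp, mgf, cgf, ← integral_const_mul]
    congr 2 with x
    ring
  rw [deriv_cgf (h.mem_interior_integrableExpSet μ hW t), mul_div_assoc', div_le_iff₀ hpos]
  rw [hentropy, expRemainder] at hent
  linarith

/-- At exponents `t ≤ 0`, a self-bounding function is at least as concentrated as a Poisson
variable of the same mean. -/
lemma mgf_le (h : IsSelfBounding W V) (hW : Measurable W) (hV : ∀ i, Measurable (V i))
    {t : ℝ} (ht : t ≤ 0) :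
    mgf W (.pi μ) t ≤ exp ((∫ x, W x ∂(.pi μ)) * (exp t - 1)) := by
  have hmem := h.mem_interior_integrableExpSet μ hW
  have hcgf := le_deriv_mul_exp_sub_one
    (fun s => (analyticAt_cgf (hmem s)).differentiableAt) cgf_zero
    (fun s _ => h.one_sub_exp_neg_mul_deriv_cgf_le μ hW hV s) ht
  rw [deriv_cgf_zero (hmem 0), probReal_univ, div_one] at hcgf
  rw [← exp_cgf (h.integrable_exp_mul μ hW t)]
  exact exp_le_exp.2 hcgf

lemma measureReal_le_sub_le (h : IsSelfBounding W V) (hW : Measurable W)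
    (hV : ∀ i, Measurable (V i)) {E s : ℝ} (hE : ∫ x, W x ∂(.pi μ) = E) (hE_pos : 0 < E)
    (hs : 0 ≤ s) :
    (Measure.pi μ).real {x | W x ≤ E - s} ≤ exp (-(s ^ 2 / (2 * E))) := by
  have ht : -(s / E) ≤ 0 := neg_nonpos.2 (by positivity)
  calc (Measure.pi μ).real {x | W x ≤ E - s}
      ≤ exp (-(-(s / E)) * (E - s)) * mgf W (.pi μ) (-(s / E)) :=
        measure_le_le_exp_mul_mgf _ ht (h.integrable_exp_mul μ hW _)
    _ ≤ exp (-(-(s / E)) * (E - s)) * exp (E * (-(s / E) + (-(s / E)) ^ 2 / 2)) := by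
        gcongr
        refine (h.mgf_le μ hW hV ht).trans (exp_le_exp.2 ?_)
        rw [hE]
        gcongr
        linarith [exp_le_quadratic_of_nonpos ht]
    _ = exp (-(s ^ 2 / (2 * E))) := by
        rw [← exp_add]
        congr 1
        field_simp
        ring

theorem one_sub_le_measureReal (h : IsSelfBounding W V) (hW : Measurable W)
    (hV : ∀ i, Measurable (V i)) {E δ : ℝ} (hE : ∫ x, W x ∂(.pi μ) = E) (hδ : δ ∈ Set.Ioc 0 1) :
    1 - δ ≤ (Measure.pi μ).real {x | E - W x ≤ √(2 * E * log (1 / δ))} := by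
  have hE_nonneg : 0 ≤ E := hE ▸ integral_nonneg h.nonneg
  have hlog : 0 ≤ log (1 / δ) := log_nonneg ((one_le_div hδ.1).2 hδ.2)
  rcases hE_nonneg.eq_or_lt with rfl | hE_pos
  · have huniv : {x | 0 - W x ≤ √(2 * 0 * log (1 / δ))} = Set.univ :=
      Set.eq_univ_of_forall fun x =>
        (sub_nonpos.2 (h.nonneg x)).trans (sqrt_nonneg _)
    rw [huniv, probReal_univ]
    linarith [hδ.1]
  · set s := √(2 * E * log (1 / δ))
    have htail : (Measure.pi μ).real {x | W x ≤ E - s} ≤ δ := by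
      refine (h.measureReal_le_sub_le μ hW hV hE hE_pos (sqrt_nonneg _)).trans_eq ?_
      rw [sq_sqrt (by positivity), mul_div_cancel_left₀ _ (by positivity), one_div, log_inv,
        neg_neg, exp_log hδ.1]
    have hcompl : {x | E - W x ≤ s}ᶜ ⊆ {x | W x ≤ E - s} := fun x hx => by
      simp only [Set.mem_compl_iff, Set.mem_ofPred_eq, not_le] at hx ⊢
      linarith
    have hmeas : MeasurableSet {x | E - W x ≤ s} :=
      measurableSet_le (hW.const_sub E) measurable_const
    have := probReal_compl_eq_one_sub (μ := Measure.pi μ) hmeas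
    linarith [measureReal_mono (μ := Measure.pi μ) hcompl]

end IsSelfBounding
end SelfBounding

section RademacherSup

open Real

variable {ι κ : Type*} [Fintype κ]

/-- The supremum `sup_l ∑_k x_k a_{l,k}` of the Rademacher process with coefficients `a`, the signs
`x_k` being encoded as Booleans. -/
def rademacherSup (a : ι → κ → ℝ) (x : κ → Bool) : ℝ :=
  ⨆ l, ∑ k, sgnB (x k) * a l k

lemma abs_sgnB_mul (c : Bool) (r : ℝ) : |sgnB c * r| = |r| := by
  cases c <;> simp [sgnB]

variable {a : ι → κ → ℝ} {z : ℝ}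

lemma bddAbove_range_sum_abs (ha : ∀ l k, |a l k| ≤ z) :
    BddAbove (Set.range fun l => ∑ k, |a l k|) := by
  refine ⟨∑ _k : κ, z, ?_⟩
  rintro _ ⟨l, rfl⟩
  exact Finset.sum_le_sum fun k _ => ha l k

lemma sum_sgnB_mul_le_sum_abs (x : κ → Bool) (b : κ → ℝ) :
    ∑ k, sgnB (x k) * b k ≤ ∑ k, |b k| :=
  Finset.sum_le_sum fun k _ => (le_abs_self _).trans_eq (abs_sgnB_mul (x k) (b k))

lemma bddAbove_range_sum_sgnB_mul (ha : ∀ l k, |a l k| ≤ z) (x : κ → Bool) :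
    BddAbove (Set.range fun l => ∑ k, sgnB (x k) * a l k) :=
  (bddAbove_range_sum_abs ha).range_mono _ fun l => sum_sgnB_mul_le_sum_abs x (a l)

lemma neg_iSup_sum_abs_le_rademacherSup [Nonempty ι] (ha : ∀ l k, |a l k| ≤ z) (x : κ → Bool) :
    -⨆ l, ∑ k, |a l k| ≤ rademacherSup a x := by
  obtain ⟨l⟩ := ‹Nonempty ι›
  calc -⨆ l, ∑ k, |a l k| ≤ -∑ k, |a l k| := neg_le_neg (le_ciSup (bddAbove_range_sum_abs ha) l)
    _ ≤ ∑ k, sgnB (x k) * a l k := by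
      have := sum_sgnB_mul_le_sum_abs x fun k => -a l k
      simp only [mul_neg, Finset.sum_neg_distrib, abs_neg] at this
      linarith
    _ ≤ rademacherSup a x := le_ciSup (bddAbove_range_sum_sgnB_mul ha x) l

section Inf

variable [DecidableEq κ]

/-- The infimum of `rademacherSup a` over the two values of the `k`-th sign. -/
def rademacherInf (a : ι → κ → ℝ) (k : κ) (x : κ → Bool) : ℝ :=
  ⨅ c, rademacherSup a (Function.update x k c)

lemma dependsOn_rademacherInf (k : κ) : DependsOn (rademacherInf a k) {k}ᶜ := fun x y hxy => by
  have hupdate (c : Bool) : Function.update x k c = Function.update y k c := by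
    ext i
    rcases eq_or_ne i k with rfl | hi
    · simp
    · simp [hi, hxy i hi]
  simp only [rademacherInf, hupdate]

lemma rademacherInf_le (k : κ) (x : κ → Bool) : rademacherInf a k x ≤ rademacherSup a x :=
  (ciInf_le (Set.finite_range _).bddBelow (x k)).trans_eq (by rw [Function.update_eq_self])

lemma sum_sgnB_update (b : κ → ℝ) (x : κ → Bool) (k : κ) (c : Bool) :
    ∑ i, sgnB (Function.update x k c i) * b i =
      ∑ i, sgnB (x i) * b i - sgnB (x k) * b k + sgnB c * b k := by
  simp only [Function.apply_update (fun _ => sgnB), ← Finset.add_sum_erase _ _ (Finset.mem_univ k),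
    Function.update_self]
  rw [Finset.sum_congr rfl fun i hi => by rw [Function.update_of_ne (Finset.ne_of_mem_erase hi)]]
  ring

lemma sum_sub_le_rademacherInf (ha : ∀ l k, |a l k| ≤ z) (l : ι) (k : κ) (x : κ → Bool) :
    ∑ i, sgnB (x i) * a l i - (|a l k| + sgnB (x k) * a l k) ≤ rademacherInf a k x :=
  le_ciInf fun c => calc
    _ ≤ ∑ i, sgnB (x i) * a l i - sgnB (x k) * a l k + sgnB c * a l k := by
      linarith [neg_abs_le (sgnB c * a l k), abs_sgnB_mul c (a l k)]
    _ = ∑ i, sgnB (Function.update x k c i) * a l i := (sum_sgnB_update _ _ _ _).symm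
    _ ≤ rademacherSup a (Function.update x k c) := le_ciSup (bddAbove_range_sum_sgnB_mul ha _) l

variable [Nonempty ι]

lemma rademacherSup_sub_rademacherInf_le (ha : ∀ l k, |a l k| ≤ z) (k : κ) (x : κ → Bool) :
    rademacherSup a x - rademacherInf a k x ≤ 2 * z := by
  rw [sub_le_iff_le_add]
  refine ciSup_le fun l => ?_
  linarith [sum_sub_le_rademacherInf ha l k x, ha l k, le_abs_self (sgnB (x k) * a l k),
    abs_sgnB_mul (x k) (a l k)]

/-- Flipping the sign `x_k` costs a near-maximizer `l` of the supremum at most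
`|a_{l,k}| + x_k a_{l,k}`. -/
lemma sum_rademacherSup_sub_rademacherInf_le (ha : ∀ l k, |a l k| ≤ z) (x : κ → Bool) :
    ∑ k, (rademacherSup a x - rademacherInf a k x) ≤
      rademacherSup a x + ⨆ l, ∑ k, |a l k| := by
  refine le_of_forall_pos_le_add fun ε hε => ?_
  have hε' : 0 < ε / (Fintype.card κ + 1) := by positivity
  obtain ⟨l, hl⟩ := exists_lt_of_lt_ciSup (sub_lt_self (rademacherSup a x) hε')
  calc ∑ k, (rademacherSup a x - rademacherInf a k x)
      ≤ ∑ k, (ε / (Fintype.card κ + 1) + (|a l k| + sgnB (x k) * a l k)) :=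
        Finset.sum_le_sum fun k _ => by linarith [sum_sub_le_rademacherInf ha l k x]
    _ = Fintype.card κ * (ε / (Fintype.card κ + 1)) +
          (∑ k, |a l k| + ∑ k, sgnB (x k) * a l k) := by
        simp [Finset.sum_add_distrib]
    _ ≤ ε + ((⨆ l, ∑ k, |a l k|) + rademacherSup a x) := by
        gcongr
        · rw [← mul_div_assoc, div_le_iff₀ (by positivity)]
          linarith
        · exact le_ciSup (bddAbove_range_sum_abs ha) l
        · exact le_ciSup (bddAbove_range_sum_sgnB_mul ha x) l
    _ = _ := by ring

lemma isSelfBounding_rademacherSup (hz : 0 ≤ z) (ha : ∀ l k, |a l k| ≤ z) :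
    IsSelfBounding (fun x => (2 * z)⁻¹ * (rademacherSup a x + ⨆ l, ∑ k, |a l k|))
      fun k x => (2 * z)⁻¹ * (rademacherInf a k x + ⨆ l, ∑ k, |a l k|) where
  dependsOn k x y hxy := by simp only [dependsOn_rademacherInf k hxy]
  le k x := by
    gcongr
    exact rademacherInf_le k x
  sub_le_one k x := by
    rw [← mul_sub, add_sub_add_right_eq_sub]
    exact inv_mul_le_one_of_le₀ (rademacherSup_sub_rademacherInf_le ha k x) (by positivity)
  sum_sub_le x := by
    simp only [← mul_sub, add_sub_add_right_eq_sub, ← Finset.mul_sum]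
    gcongr
    exact sum_rademacherSup_sub_rademacherInf_le ha x

end Inf

theorem one_sub_le_measureReal_rademacherSup [Nonempty ι] (μ : κ → Measure Bool)
    [∀ k, IsProbabilityMeasure (μ k)] (hz : 0 ≤ z) (ha : ∀ l k, |a l k| ≤ z) {E δ : ℝ}
    (hE : ∫ x, rademacherSup a x ∂(.pi μ) = E) (hδ : δ ∈ Set.Ioc 0 1) :
    1 - δ ≤ (Measure.pi μ).real {x | E - rademacherSup a x ≤
      √(4 * z * (E + ⨆ l, ∑ k, |a l k|) * log (1 / δ))} := by
  classical
  set T := ⨆ l, ∑ k, |a l k|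
  have hmean : ∫ x, (2 * z)⁻¹ * (rademacherSup a x + T) ∂(.pi μ) = (2 * z)⁻¹ * (E + T) := by
    rw [integral_const_mul, integral_add .of_finite (integrable_const T), hE, integral_const,
      probReal_univ, one_smul]
  have h := (isSelfBounding_rademacherSup hz ha).one_sub_le_measureReal μ
    (measurable_of_countable _) (fun _ => measurable_of_countable _) hmean hδ
  refine h.trans (measureReal_mono fun x hx => ?_)
  rcases hz.eq_or_lt with rfl | hz
  · have h0 : ∀ l k, a l k = 0 := fun l k => abs_nonpos_iff.1 (ha l k)
    have hsup : rademacherSup a = 0 := by ext; simp [rademacherSup, h0]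
    simp [← hE, hsup]
  · have hscale : √(2 * ((2 * z)⁻¹ * (E + T)) * log (1 / δ)) =
        (2 * z)⁻¹ * √(4 * z * (E + T) * log (1 / δ)) := by
      rw [← sqrt_sq (show 0 ≤ (2 * z)⁻¹ by positivity), ← sqrt_mul (sq_nonneg _),
        sqrt_sq (by positivity)]
      congr 1
      field_simp
      ring
    rw [Set.mem_ofPred_eq, hscale, ← mul_sub, add_sub_add_right_eq_sub] at hx
    exact le_of_mul_le_mul_left hx (by positivity)

end RademacherSup

section Transfer

open Real

lemma iSup_pi_sum {κ : Type*} [Fintype κ] {ι : κ → Type*} [∀ j, Nonempty (ι j)]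
    {F : ∀ j, ι j → ℝ} (hF : ∀ j, BddAbove (Set.range (F j))) :
    ⨆ l : ∀ j, ι j, ∑ j, F j (l j) = ∑ j, ⨆ i, F j i := by
  have hle (l : ∀ j, ι j) : ∑ j, F j (l j) ≤ ∑ j, ⨆ i, F j i :=
    Finset.sum_le_sum fun j _ => le_ciSup (hF j) (l j)
  refine le_antisymm (ciSup_le hle) (le_of_forall_pos_le_add fun ε hε => ?_)
  have hε' : 0 < ε / (Fintype.card κ + 1) := by positivity
  choose l hl using fun j => exists_lt_of_lt_ciSup (sub_lt_self (⨆ i, F j i) hε')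
  calc ∑ j, ⨆ i, F j i ≤ ∑ j, (F j (l j) + ε / (Fintype.card κ + 1)) :=
        Finset.sum_le_sum fun j _ => by linarith [hl j]
    _ = ∑ j, F j (l j) + Fintype.card κ * (ε / (Fintype.card κ + 1)) := by
        simp [Finset.sum_add_distrib]
    _ ≤ (⨆ l : ∀ j, ι j, ∑ j, F j (l j)) + ε := by
        gcongr
        · exact le_ciSup (f := fun l : ∀ j, ι j => ∑ j, F j (l j))
            ⟨_, Set.forall_mem_range.2 hle⟩ l
        · rw [← mul_div_assoc, div_le_iff₀ (by positivity)]
          linarith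

lemma measurePreserving_uniformOfFintype {κ α β : Type*} [Fintype κ] [Fintype α] [Nonempty α]
    [MeasurableSpace α] [MeasurableSingletonClass α] [Fintype β] [Nonempty β] [MeasurableSpace β]
    [MeasurableSingletonClass β] (e : (κ → α) ≃ᵐ β) :
    MeasurePreserving e (.pi fun _ => (PMF.uniformOfFintype α).toMeasure)
      (PMF.uniformOfFintype β).toMeasure := by
  classical
  refine ⟨e.measurable, Measure.ext_of_singleton fun b => ?_⟩
  have hcard : Fintype.card β = Fintype.card α ^ Fintype.card κ := by
    rw [← Fintype.card_congr e.toEquiv, Fintype.card_fun]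
  have hpreimage : e ⁻¹' {b} = {e.symm b} := by
    ext x
    simp [e.eq_symm_apply]
  rw [e.map_apply, hpreimage, Measure.pi_singleton]
  simp [hcard, ENNReal.inv_pow]

lemma le_add_sqrt_of_sub_le_sqrt {A E R N : ℝ} (hA : 0 ≤ A) (hE : 0 ≤ E + N)
    (h : E - R ≤ √(2 * A * (E + N))) : E ≤ R + A + √(A ^ 2 + 2 * A * (R + N)) := by
  rcases le_total (E - R) A with hER | hER
  · linarith [sqrt_nonneg (A ^ 2 + 2 * A * (R + N))]
  · have hsq : (E - R) ^ 2 ≤ 2 * A * (E + N) := by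
      rw [← sq_sqrt (show 0 ≤ 2 * A * (E + N) by positivity)]
      exact pow_le_pow_left₀ (hA.trans hER) h 2
    have : E - R - A ≤ √(A ^ 2 + 2 * A * (R + N)) := le_sqrt_of_sq_le (by linarith)
    linarith

variable {X ι : Type*} {f : ι → X → ℝ} {n m : ℕ} {S : Fin m → X}

/-- The coefficients for which the sum over the `n` rows of the Rademacher suprema is the supremum
of a single Rademacher process: the index is a choice of one function per row. -/
def rowwiseCoeff (f : ι → X → ℝ) (n : ℕ) (S : Fin m → X) (l : Fin n → ι) (p : Fin n × Fin m) : ℝ :=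
  f (l p.1) (S p.2)

lemma abs_rowwiseCoeff_le {z : ℝ} (hz : ∀ l k, |f l (S k)| ≤ z) (l : Fin n → ι)
    (p : Fin n × Fin m) : |rowwiseCoeff f n S l p| ≤ z :=
  hz (l p.1) p.2

lemma mcera_eq_gup (f : ι → X → ℝ) (S : Fin m → X) (σ : Fin n → Fin m → Bool) :
    mcera f n m S σ = ((n : ℝ) * m)⁻¹ * gup f S σ := by
  simp only [mcera, gup, ← Real.mul_iSup_of_nonneg (inv_nonneg.2 (Nat.cast_nonneg (α := ℝ) m)),
    ← Finset.mul_sum, mul_inv, mul_assoc]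

variable [Nonempty ι] {z : ℝ}

lemma gup_eq_rademacherSup (hz : ∀ l k, |f l (S k)| ≤ z) (x : Fin n × Fin m → Bool) :
    gup f S (Function.curry x) = rademacherSup (rowwiseCoeff f n S) x := by
  simp only [gup, rademacherSup, Fintype.sum_prod_type, rowwiseCoeff, Function.curry]
  exact (iSup_pi_sum fun j => bddAbove_range_sum_sgnB_mul hz _).symm

lemma iSup_sum_abs_rowwiseCoeff (hm : 0 < m) (hz : ∀ l k, |f l (S k)| ≤ z) :
    ⨆ l, ∑ p, |rowwiseCoeff f n S l p| = n * m * nuhat f S := by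
  simp only [Fintype.sum_prod_type, rowwiseCoeff, nuhat]
  rw [iSup_pi_sum fun _ => bddAbove_range_sum_abs hz]
  have : (m : ℝ) ≠ 0 := by positivity
  simp
  field_simp

lemma mcera_curry (hz : ∀ l k, |f l (S k)| ≤ z) (x : Fin n × Fin m → Bool) :
    mcera f n m S (Function.curry x) =
      ((n : ℝ) * m)⁻¹ * rademacherSup (rowwiseCoeff f n S) x := by
  rw [mcera_eq_gup, gup_eq_rademacherSup hz]

instance (n m : ℕ) : IsProbabilityMeasure (radMeasure n m) :=
  PMF.toMeasure.isProbabilityMeasure _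

lemma measurePreserving_curry_radMeasure (n m : ℕ) :
    MeasurePreserving (MeasurableEquiv.curry (Fin n) (Fin m) Bool)
      (.pi fun _ => (PMF.uniformOfFintype Bool).toMeasure) (radMeasure n m) :=
  measurePreserving_uniformOfFintype _

lemma integral_rademacherSup_rowwiseCoeff (hn : 0 < n) (hm : 0 < m)
    (hz : ∀ l k, |f l (S k)| ≤ z) :
    ∫ x, rademacherSup (rowwiseCoeff f n S) x ∂(.pi fun _ => (PMF.uniformOfFintype Bool).toMeasure)
      = n * m * era f n m S := by
  rw [era, ← (measurePreserving_curry_radMeasure n m).integral_comp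
    (MeasurableEquiv.measurableEmbedding _)]
  simp only [MeasurableEquiv.coe_curry, mcera_curry hz, integral_const_mul]
  field_simp

lemma era_add_nuhat_nonneg (hn : 0 < n) (hm : 0 < m) (hz : ∀ l k, |f l (S k)| ≤ z) :
    0 ≤ era f n m S + nuhat f S := by
  have hsup (x : Fin n × Fin m → Bool) :
      -(n * m * nuhat f S) ≤ rademacherSup (rowwiseCoeff f n S) x := by
    rw [← iSup_sum_abs_rowwiseCoeff hm hz]
    exact neg_iSup_sum_abs_le_rademacherSup (abs_rowwiseCoeff_le hz) x
  have hmean := integral_mono (integrable_const _) .of_finite hsup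
    (μ := .pi fun _ => (PMF.uniformOfFintype Bool).toMeasure)
  rw [integral_const, probReal_univ, one_smul, integral_rademacherSup_rowwiseCoeff hn hm hz]
    at hmean
  exact (mul_nonneg_iff_of_pos_left (show (0 : ℝ) < n * m by positivity)).1 (by linarith)

theorem one_sub_le_measureReal_era_sub_mcera (hn : 0 < n) (hm : 0 < m) (hz₀ : 0 ≤ z)
    (hz : ∀ l k, |f l (S k)| ≤ z) {δ : ℝ} (hδ : δ ∈ Set.Ioc 0 1) :
    1 - δ ≤ (radMeasure n m).real {σ | era f n m S - mcera f n m S σ ≤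
      √(4 * z * (era f n m S + nuhat f S) * log (1 / δ) / (n * m))} := by
  have hconc := one_sub_le_measureReal_rademacherSup (a := rowwiseCoeff f n S)
    (fun _ => (PMF.uniformOfFintype Bool).toMeasure) hz₀ (abs_rowwiseCoeff_le hz)
    (integral_rademacherSup_rowwiseCoeff hn hm hz) hδ
  rw [iSup_sum_abs_rowwiseCoeff hm hz] at hconc
  rw [← (measurePreserving_curry_radMeasure n m).measureReal_preimage
    MeasurableSet.of_discrete.nullMeasurableSet]
  refine hconc.trans (measureReal_mono fun x hx => ?_)
  have hnm : (0 : ℝ) < n * m := by positivity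
  have hscale : 4 * z * (n * m * era f n m S + n * m * nuhat f S) * log (1 / δ) =
      (n * m) ^ 2 * (4 * z * (era f n m S + nuhat f S) * log (1 / δ) / (n * m)) := by
    field_simp
  rw [Set.mem_ofPred_eq, hscale, sqrt_mul (sq_nonneg _), sqrt_sq hnm.le] at hx
  refine le_of_mul_le_mul_left ?_ hnm
  rwa [MeasurableEquiv.coe_curry, mcera_curry hz, mul_sub, mul_inv_cancel_left₀ hnm.ne']

end Transfer

theorem stmt_7_general {X ι : Type*} [Nonempty ι] (f : ι → X → ℝ) {n m : ℕ} (hn : 0 < n)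
    (hm : 0 < m) (S : Fin m → X) (hf : BddAbove (Set.range fun p : ι × Fin m => |f p.1 (S p.2)|))
    {δ : ℝ} (hδ : δ ∈ Set.Ioc 0 1) :
    1 - δ ≤ (radMeasure n m).real
        {σ | era f n m S ≤ mcera f n m S σ +
          2 * zhat f S * Real.log (1 / δ) / (n * m) +
          √((2 * zhat f S * Real.log (1 / δ) / (n * m)) ^ 2 +
            4 * zhat f S * (mcera f n m S σ + nuhat f S) * Real.log (1 / δ) / (n * m))} := by
  have hz : ∀ l k, |f l (S k)| ≤ zhat f S := fun l k => le_ciSup hf (l, k)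
  have hz₀ : 0 ≤ zhat f S := Real.iSup_nonneg fun _ => abs_nonneg _
  have hlog : 0 ≤ Real.log (1 / δ) := Real.log_nonneg ((one_le_div hδ.1).2 hδ.2)
  refine (one_sub_le_measureReal_era_sub_mcera hn hm hz₀ hz hδ).trans
    (measureReal_mono fun σ hσ => ?_)
  have hsolve := le_add_sqrt_of_sub_le_sqrt (A := 2 * zhat f S * Real.log (1 / δ) / (n * m))
    (R := mcera f n m S σ) (by positivity) (era_add_nuhat_nonneg hn hm hz)
    (hσ.trans_eq (by congr 1; ring))
  exact hsolve.trans_eq (by congr 2; ring)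

theorem stmt_7 {X : Type*} [MeasurableSpace X] {ι : Type*} [Countable ι]
    (f : ι → X → ℝ) (a b : ℝ) (ha : a ≤ 0) (hb : 0 < b)
    (hmeas : ∀ l : ι, Measurable (f l))
    (hrange : ∀ (l : ι) (x : X), f l x ∈ Set.Icc a b)
    (hzero : ∃ l₀ : ι, ∀ x : X, f l₀ x = 0)
    (n m : ℕ) (hn : 0 < n) (hm : 0 < m) (S : Fin m → X)
    (δ : ℝ) (hδ : δ ∈ Set.Ioo (0 : ℝ) 1) :
    1 - δ ≤ (radMeasure n m
        {σ : Fin n → Fin m → Bool | era f n m S ≤ mcera f n m S σ +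
          2 * zhat f S * Real.log (1 / δ) / ((n : ℝ) * (m : ℝ)) +
          Real.sqrt ((2 * zhat f S * Real.log (1 / δ) / ((n : ℝ) * (m : ℝ))) ^ 2 +
            4 * zhat f S * (mcera f n m S σ + nuhat f S) * Real.log (1 / δ) /
              ((n : ℝ) * (m : ℝ)))}).toReal :=
  have : Nonempty ι := hzero.nonempty
  stmt_7_general f hn hm S ⟨max |a| |b|, Set.forall_mem_range.2 fun _ =>
    abs_le_max_abs_abs (hrange _ _).1 (hrange _ _).2⟩ (Set.Ioo_subset_Ioc_self hδ)
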